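/- arXiv:1804.02785 — 2 statements merged into one kernel-verified Lean document; each statement's English description precedes it below -/
import Mathlib

section
/- Let S_n be the star with central vertex r and leaves V', let 𝒫 be a path cover of a graph on V' (a set of vertex-disjoint simple paths covering all of V'), and let G = S_n + 𝒫 be the unweighted graph obtained by adding all edges of the paths of 𝒫 to S_n. Let u, v ∈ V' with u ≠ v. If u is an interior vertex of some path of 𝒫 (i.e., u lies on a path of 𝒫 and is not an endpoint of that path), and v lies on a path of 𝒫 having at least one edge, then the effective resistance satisfies R_G(u,v) ≤ 7/6. -/
open Matrix

/-- The Laplacian matrix of a weighted graph given by a weight function. -/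
def lapG {V : Type*} [Fintype V] [DecidableEq V] (W : V → V → ℝ) : Matrix V V ℝ :=
  fun i j => if i = j then ∑ k, W i k else -(W i j)

/-- The star graph `S_n`: the central vertex is `Fin.last n`, joined to the `n`
leaves `0, …, n-1` by unit-weight edges. -/
def starW (n : ℕ) : Fin (n + 1) → Fin (n + 1) → ℝ :=
  fun i j => if i ≠ j ∧ (i = Fin.last n ∨ j = Fin.last n) then 1 else 0

/-- The star `S_n` plus, for each list `l ∈ Ps` of leaves, the path consisting of
unit-weight edges between consecutive vertices of `l`. -/
def starPlusPaths (n : ℕ) (Ps : List (List (Fin n))) : Fin (n + 1) → Fin (n + 1) → ℝ :=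
  fun i j => starW n i j +
    if ∃ a b : Fin n, i = a.castSucc ∧ j = b.castSucc ∧
        ∃ l ∈ Ps, ((a, b) ∈ l.zip l.tail ∨ (b, a) ∈ l.zip l.tail) then 1 else 0

/-- `Ps` is a path cover of the leaf set: each member is a nonempty duplicate-free
list of leaves, the members are pairwise vertex-disjoint, and every leaf is covered. -/
def IsPathCover (n : ℕ) (Ps : List (List (Fin n))) : Prop :=
  (∀ l ∈ Ps, l ≠ [] ∧ l.Nodup) ∧
    Ps.Pairwise (fun l₁ l₂ => ∀ x ∈ l₁, x ∉ l₂) ∧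
    (∀ v : Fin n, ∃ l ∈ Ps, v ∈ l)

/-!
The potential `x` has Dirichlet energy `x u - x v`. Truncating `x` at its value at the centre `r`
splits it into `max x (x r)` and `min x (x r)`, whose energies add up to at most that of `x`, so
the parts of the graph around `u` and `v` can be estimated separately even when they overlap. The
energy of the upper part is at least `c u * (max (x u) (x r) - x r) ^ 2`, where `c u` is the
conductance of the edge `u r` in parallel with all two-edge routes from `u` to `r`, and similarly
for the lower part and `v`. Maximizing over the two drops gives `x u - x v ≤ (c u)⁻¹ + (c v)⁻¹`. A
leaf with `d` path neighbours has `c ≥ 1 + d / 2`, and `1 / 2 + 2 / 3 = 7 / 6`.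
-/

/-- The parallel combination, over all intermediate vertices, of the two-edge routes from `u` to
`r`, together with the edge `u r` itself: a lower bound for the effective conductance between `u`
and `r`. A missing edge contributes `0`, also when both edges of a route are missing, because
`0 / 0 = 0`. -/
noncomputable def twoStepConductance {V : Type*} [Fintype V] (W : V → V → ℝ) (u r : V) : ℝ :=
  W u r + ∑ a, W u a * W a r / (W u a + W a r)

/-- The Dirichlet energy of the potential `x`; halving makes each edge count once although the sum
runs over ordered pairs. -/
noncomputable def dirichletEnergy {V : Type*} [Fintype V] (W : V → V → ℝ) (x : V → ℝ) : ℝ :=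
  (∑ i, ∑ j, W i j * (x i - x j) ^ 2) / 2

/-- Two leaves are consecutive, in either order, on one of the paths in `Ps`. -/
def PathAdj {α : Type*} (Ps : List (List α)) (a b : α) : Prop :=
  ∃ l ∈ Ps, (a, b) ∈ l.zip l.tail ∨ (b, a) ∈ l.zip l.tail

section OrderedField

variable {K : Type*} [Field K] [LinearOrder K] [IsStrictOrderedRing K]

lemma mul_div_add_mul_sq_le {p q : K} (hp : 0 ≤ p) (hq : 0 ≤ q) (s t : K) :
    p * q / (p + q) * (s + t) ^ 2 ≤ p * s ^ 2 + q * t ^ 2 := by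
  rcases (add_nonneg hp hq).eq_or_lt with h | h
  · rw [← h, div_zero, zero_mul]
    positivity
  · rw [div_mul_eq_mul_div, div_le_iff₀ h]
    nlinarith [sq_nonneg (p * s - q * t)]

lemma two_mul_sub_mul_sq_le_inv {c : K} (hc : 0 < c) (t : K) : 2 * t - c * t ^ 2 ≤ c⁻¹ := by
  have hsq : c⁻¹ - (2 * t - c * t ^ 2) = c * (t - c⁻¹) ^ 2 := by
    field_simp
    ring
  have : 0 ≤ c * (t - c⁻¹) ^ 2 := by positivity
  linarith

lemma sq_max_sub_max_add_sq_min_sub_min_le (s t c : K) :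
    (max s c - max t c) ^ 2 + (min s c - min t c) ^ 2 ≤ (s - t) ^ 2 := by
  rcases le_total s c with hs | hs <;> rcases le_total t c with ht | ht <;>
    simp only [max_eq_left, max_eq_right, min_eq_left, min_eq_right, hs, ht] <;>
    nlinarith [mul_nonneg (sub_nonneg.2 hs) (sub_nonneg.2 ht)]

lemma add_sum_add_le_half_sum_sum {V : Type*} [Fintype V] [DecidableEq V] {f : V → V → K}
    (hsymm : ∀ i j, f i j = f j i) (hnonneg : ∀ i j, 0 ≤ f i j) {u r : V} (hur : u ≠ r) :
    f u r + ∑ a ∈ {u, r}ᶜ, (f u a + f a r) ≤ (∑ i, ∑ j, f i j) / 2 := by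
  have hsplit (g : V → K) : ∑ a, g a = g u + g r + ∑ a ∈ {u, r}ᶜ, g a := by
    rw [← Finset.sum_pair hur, Finset.sum_add_sum_compl]
  have hrest : ∑ a ∈ {u, r}ᶜ, (f u a + f a r) ≤ ∑ a ∈ {u, r}ᶜ, ∑ j, f a j := by
    refine Finset.sum_le_sum fun a _ => ?_
    have := Finset.sum_nonneg fun j (_ : j ∈ ({u, r}ᶜ : Finset V)) => hnonneg a j
    rw [hsplit (f a), hsymm u a]
    linarith
  have hrows : f u r + f u r + ∑ a ∈ {u, r}ᶜ, (f u a + f a r) ≤ ∑ j, f u j + ∑ j, f r j := by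
    rw [hsplit (f u), hsplit (f r), Finset.sum_add_distrib, hsymm r u]
    simp only [hsymm r]
    linarith [hnonneg u u, hnonneg r r]
  rw [hsplit fun i => ∑ j, f i j]
  linarith

end OrderedField

section Energy

variable {V : Type*} [Fintype V] {W : V → V → ℝ}

lemma lapG_mulVec_apply [DecidableEq V] (hloop : ∀ i, W i i = 0) (x : V → ℝ) (i : V) :
    (lapG W *ᵥ x) i = ∑ j, W i j * (x i - x j) := by
  have hentry (j : V) :
      lapG W i j * x j = (if i = j then (∑ k, W i k) * x i else 0) - W i j * x j := by
    by_cases hij : i = j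
    · subst hij
      simp [lapG, hloop]
    · simp [lapG, hij]
  simp only [mulVec, dotProduct, hentry, Finset.sum_sub_distrib, Finset.sum_ite_eq,
    Finset.mem_univ, if_true, mul_sub, Finset.sum_mul]

lemma dotProduct_lapG_mulVec [DecidableEq V] (hsymm : ∀ i j, W i j = W j i)
    (hloop : ∀ i, W i i = 0) (x : V → ℝ) :
    x ⬝ᵥ (lapG W *ᵥ x) = dirichletEnergy W x := by
  have hform : x ⬝ᵥ (lapG W *ᵥ x) = ∑ i, ∑ j, W i j * (x i * (x i - x j)) := by
    simp only [dotProduct, lapG_mulVec_apply hloop, Finset.mul_sum, mul_left_comm]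
  have hswap : ∑ i, ∑ j, W i j * (x i * (x i - x j)) = ∑ i, ∑ j, W i j * (x j * (x j - x i)) := by
    rw [Finset.sum_comm]
    simp only [hsymm]
  have hsq : ∑ i, ∑ j, W i j * (x i - x j) ^ 2 =
      ∑ i, ∑ j, W i j * (x i * (x i - x j)) + ∑ i, ∑ j, W i j * (x j * (x j - x i)) := by
    simp only [← Finset.sum_add_distrib]
    exact Finset.sum_congr rfl fun i _ => Finset.sum_congr rfl fun j _ => by ring
  rw [dirichletEnergy, hform]
  linarith

lemma dirichletEnergy_max_add_dirichletEnergy_min_le (hnonneg : ∀ i j, 0 ≤ W i j) (x : V → ℝ)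
    (c : ℝ) :
    dirichletEnergy W (fun i => max (x i) c) + dirichletEnergy W (fun i => min (x i) c) ≤
      dirichletEnergy W x := by
  simp only [dirichletEnergy, ← add_div, ← Finset.sum_add_distrib, ← mul_add]
  gcongr with i _ j _
  · exact hnonneg i j
  · exact sq_max_sub_max_add_sq_min_sub_min_le (x i) (x j) c

lemma add_sum_le_twoStepConductance (hnonneg : ∀ i j, 0 ≤ W i j) (u r : V) (s : Finset V) :
    W u r + ∑ a ∈ s, W u a * W a r / (W u a + W a r) ≤ twoStepConductance W u r := by
  have hsub : ∑ a ∈ s, W u a * W a r / (W u a + W a r) ≤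
      ∑ a, W u a * W a r / (W u a + W a r) :=
    Finset.sum_le_univ_sum_of_nonneg fun a =>
      div_nonneg (mul_nonneg (hnonneg u a) (hnonneg a r)) (add_nonneg (hnonneg u a) (hnonneg a r))
  unfold twoStepConductance
  linarith

lemma twoStepConductance_mul_sq_le_dirichletEnergy (hsymm : ∀ i j, W i j = W j i)
    (hloop : ∀ i, W i i = 0) (hnonneg : ∀ i j, 0 ≤ W i j) {u r : V} (hur : u ≠ r) (x : V → ℝ) :
    twoStepConductance W u r * (x u - x r) ^ 2 ≤ dirichletEnergy W x := by
  classical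
  have hroutes : ∑ a, W u a * W a r / (W u a + W a r) =
      ∑ a ∈ {u, r}ᶜ, W u a * W a r / (W u a + W a r) := by
    rw [← Finset.sum_add_sum_compl {u, r}, Finset.sum_pair hur]
    simp [hloop]
  have hroute (a : V) : W u a * W a r / (W u a + W a r) * (x u - x r) ^ 2 ≤
      W u a * (x u - x a) ^ 2 + W a r * (x a - x r) ^ 2 := by
    simpa using mul_div_add_mul_sq_le (hnonneg u a) (hnonneg a r) (x u - x a) (x a - x r)
  calc twoStepConductance W u r * (x u - x r) ^ 2
      = W u r * (x u - x r) ^ 2 +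
          ∑ a ∈ {u, r}ᶜ, W u a * W a r / (W u a + W a r) * (x u - x r) ^ 2 := by
        rw [twoStepConductance, hroutes, add_mul, Finset.sum_mul]
    _ ≤ W u r * (x u - x r) ^ 2 +
          ∑ a ∈ {u, r}ᶜ, (W u a * (x u - x a) ^ 2 + W a r * (x a - x r) ^ 2) := by
        gcongr with a
        exact hroute a
    _ ≤ dirichletEnergy W x :=
        add_sum_add_le_half_sum_sum (f := fun i j => W i j * (x i - x j) ^ 2)
          (fun i j => by rw [hsymm i j]; ring)
          (fun i j => mul_nonneg (hnonneg i j) (sq_nonneg _)) hur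

theorem effectiveResistance_le_inv_twoStepConductance_add_inv [DecidableEq V]
    (hsymm : ∀ i j, W i j = W j i) (hloop : ∀ i, W i i = 0) (hnonneg : ∀ i j, 0 ≤ W i j)
    {r u v : V} (hur : u ≠ r) (hvr : v ≠ r) (hu : 0 < twoStepConductance W u r)
    (hv : 0 < twoStepConductance W v r) {x : V → ℝ}
    (hx : lapG W *ᵥ x = Pi.single u 1 - Pi.single v 1) :
    (Pi.single u 1 - Pi.single v 1) ⬝ᵥ x ≤
      (twoStepConductance W u r)⁻¹ + (twoStepConductance W v r)⁻¹ := by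
  have hdrop : (Pi.single u 1 - Pi.single v 1) ⬝ᵥ x = x u - x v := by
    simp [sub_dotProduct]
  have henergy : dirichletEnergy W x = x u - x v := by
    rw [← dotProduct_lapG_mulVec hsymm hloop, hx, dotProduct_comm, hdrop]
  have htrunc := dirichletEnergy_max_add_dirichletEnergy_min_le hnonneg x (x r)
  have habove := twoStepConductance_mul_sq_le_dirichletEnergy hsymm hloop hnonneg hur
    (fun i => max (x i) (x r))
  have hbelow := twoStepConductance_mul_sq_le_dirichletEnergy hsymm hloop hnonneg hvr
    (fun i => min (x i) (x r))
  simp only [max_self, min_self] at habove hbelow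
  have hquad_u := two_mul_sub_mul_sq_le_inv hu (max (x u) (x r) - x r)
  have hquad_v := two_mul_sub_mul_sq_le_inv hv (x r - min (x v) (x r))
  rw [sub_sq_comm] at hquad_v
  have hu_le := le_max_left (x u) (x r)
  have hle_v := min_le_left (x v) (x r)
  calc (Pi.single u 1 - Pi.single v 1) ⬝ᵥ x
      = 2 * (x u - x v) - dirichletEnergy W x := by
        rw [hdrop, henergy]
        ring
    _ ≤ 2 * (max (x u) (x r) - min (x v) (x r)) -
          (dirichletEnergy W (fun i => max (x i) (x r)) +
            dirichletEnergy W (fun i => min (x i) (x r))) := by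
        gcongr
    _ ≤ (twoStepConductance W u r)⁻¹ + (twoStepConductance W v r)⁻¹ := by
        linarith

end Energy

section Paths

variable {α : Type*}

lemma mk_mem_zip_tail_iff {l : List α} {a b : α} : (a, b) ∈ l.zip l.tail ↔ [a, b] <:+: l := by
  induction l with
  | nil => simp
  | cons c l ih => cases l <;> simp_all [List.infix_cons_iff]

variable {Ps : List (List α)} {p : List α} {a b : α}

lemma PathAdj.symm (h : PathAdj Ps a b) : PathAdj Ps b a :=
  let ⟨l, hl, hab⟩ := h
  ⟨l, hl, hab.symm⟩

lemma pathAdj_of_infix (hp : p ∈ Ps) (h : [a, b] <:+: p) : PathAdj Ps a b :=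
  ⟨p, hp, .inl (mk_mem_zip_tail_iff.2 h)⟩

lemma not_pathAdj_self (hPs : ∀ l ∈ Ps, l.Nodup) (a : α) : ¬ PathAdj Ps a a := by
  rintro ⟨l, hl, h⟩
  have : [a, a].Nodup := (hPs l hl).sublist (mk_mem_zip_tail_iff.1 (or_self_iff.1 h)).sublist
  simp at this

lemma exists_ne_pathAdj_of_ne_head_of_ne_getLast (hp : p ∈ Ps) (hnodup : p.Nodup) (hne : p ≠ [])
    (ha : a ∈ p) (hhead : a ≠ p.head hne) (hlast : a ≠ p.getLast hne) :
    ∃ b c, b ≠ c ∧ PathAdj Ps a b ∧ PathAdj Ps a c := by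
  obtain ⟨s, t, rfl⟩ := List.append_of_mem ha
  obtain rfl | ⟨s, b, rfl⟩ := s.eq_nil_or_concat
  · simp at hhead
  obtain _ | ⟨c, t⟩ := t
  · simp at hlast
  refine ⟨b, c, ?_, (pathAdj_of_infix hp ⟨s, c :: t, by simp⟩).symm,
    pathAdj_of_infix hp ⟨s ++ [b], t, by simp⟩⟩
  rintro rfl
  simp [List.nodup_append] at hnodup

lemma exists_pathAdj_of_two_le_length (hp : p ∈ Ps) (ha : a ∈ p) (hlen : 2 ≤ p.length) :
    ∃ b, PathAdj Ps a b := by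
  obtain ⟨s, t, rfl⟩ := List.append_of_mem ha
  obtain _ | ⟨b, t⟩ := t
  · obtain rfl | ⟨s, b, rfl⟩ := s.eq_nil_or_concat
    · simp at hlen
    · exact ⟨b, (pathAdj_of_infix hp ⟨s, [], by simp⟩).symm⟩
  · exact ⟨b, pathAdj_of_infix hp ⟨s, t, by simp⟩⟩

end Paths

section StarPlusPaths

variable {n : ℕ} {Ps : List (List (Fin n))}

open Classical in
lemma starPlusPaths_apply (i j : Fin (n + 1)) :
    starPlusPaths n Ps i j = starW n i j +
      if ∃ a b : Fin n, i = a.castSucc ∧ j = b.castSucc ∧ PathAdj Ps a b then 1 else 0 := by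
  unfold starPlusPaths PathAdj
  congr

lemma starPlusPaths_symm (i j : Fin (n + 1)) : starPlusPaths n Ps i j = starPlusPaths n Ps j i := by
  classical
  have hstar : starW n i j = starW n j i := by
    simp only [starW, ne_comm, or_comm]
  have hpath : (∃ a b : Fin n, i = a.castSucc ∧ j = b.castSucc ∧ PathAdj Ps a b) ↔
      ∃ a b : Fin n, j = a.castSucc ∧ i = b.castSucc ∧ PathAdj Ps a b :=
    ⟨fun ⟨a, b, hi, hj, hab⟩ => ⟨b, a, hj, hi, hab.symm⟩,
      fun ⟨a, b, hj, hi, hab⟩ => ⟨b, a, hi, hj, hab.symm⟩⟩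
  rw [starPlusPaths_apply, starPlusPaths_apply, hstar, add_right_inj]
  exact if_congr hpath rfl rfl

lemma starPlusPaths_nonneg (i j : Fin (n + 1)) : 0 ≤ starPlusPaths n Ps i j := by
  unfold starPlusPaths starW
  positivity

lemma starPlusPaths_self (hPs : ∀ l ∈ Ps, l.Nodup) (i : Fin (n + 1)) :
    starPlusPaths n Ps i i = 0 := by
  have hpath : ¬ ∃ a b : Fin n, i = a.castSucc ∧ i = b.castSucc ∧ PathAdj Ps a b := by
    rintro ⟨a, b, rfl, hab, h⟩
    exact not_pathAdj_self hPs a (Fin.castSucc_injective n hab ▸ h)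
  rw [starPlusPaths_apply, starW, if_neg fun h => h.1 rfl, if_neg hpath, add_zero]

lemma starPlusPaths_castSucc_last (a : Fin n) :
    starPlusPaths n Ps a.castSucc (Fin.last n) = 1 := by
  have hpath : ¬ ∃ b c : Fin n, a.castSucc = b.castSucc ∧ Fin.last n = c.castSucc ∧
      PathAdj Ps b c :=
    fun ⟨_, c, _, hc, _⟩ => Fin.castSucc_ne_last c hc.symm
  rw [starPlusPaths_apply, starW, if_pos ⟨Fin.castSucc_ne_last a, .inr rfl⟩, if_neg hpath,
    add_zero]

lemma starPlusPaths_castSucc_castSucc {a b : Fin n} (h : PathAdj Ps a b) :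
    starPlusPaths n Ps a.castSucc b.castSucc = 1 := by
  have hstar : ¬ (a.castSucc ≠ b.castSucc ∧ (a.castSucc = Fin.last n ∨ b.castSucc = Fin.last n)) :=
    fun h => h.2.elim (Fin.castSucc_ne_last a) (Fin.castSucc_ne_last b)
  rw [starPlusPaths_apply, starW, if_neg hstar, if_pos ⟨a, b, rfl, rfl, h⟩, zero_add]

lemma one_add_card_div_two_le_twoStepConductance {a : Fin n} {s : Finset (Fin n)}
    (hs : ∀ b ∈ s, PathAdj Ps a b) :
    1 + (s.card : ℝ) / 2 ≤ twoStepConductance (starPlusPaths n Ps) a.castSucc (Fin.last n) := by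
  have hroute : ∀ b ∈ s.map Fin.castSuccEmb,
      starPlusPaths n Ps a.castSucc b * starPlusPaths n Ps b (Fin.last n) /
        (starPlusPaths n Ps a.castSucc b + starPlusPaths n Ps b (Fin.last n)) = 1 / 2 := by
    rw [Finset.forall_mem_map]
    intro b hb
    norm_num [starPlusPaths_castSucc_castSucc (hs b hb), starPlusPaths_castSucc_last]
  calc 1 + (s.card : ℝ) / 2
      = starPlusPaths n Ps a.castSucc (Fin.last n) + ∑ b ∈ s.map Fin.castSuccEmb,
          starPlusPaths n Ps a.castSucc b * starPlusPaths n Ps b (Fin.last n) /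
            (starPlusPaths n Ps a.castSucc b + starPlusPaths n Ps b (Fin.last n)) := by
        rw [Finset.sum_congr rfl hroute, starPlusPaths_castSucc_last, Finset.sum_const,
          Finset.card_map, nsmul_eq_mul, mul_one_div]
    _ ≤ twoStepConductance (starPlusPaths n Ps) a.castSucc (Fin.last n) :=
        add_sum_le_twoStepConductance starPlusPaths_nonneg _ _ _

theorem effectiveResistance_starPlusPaths_le (hPs : ∀ l ∈ Ps, l.Nodup) {u v : Fin n}
    {s t : Finset (Fin n)} (hs : ∀ a ∈ s, PathAdj Ps u a) (ht : ∀ a ∈ t, PathAdj Ps v a)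
    {x : Fin (n + 1) → ℝ}
    (hx : lapG (starPlusPaths n Ps) *ᵥ x = Pi.single u.castSucc 1 - Pi.single v.castSucc 1) :
    (Pi.single u.castSucc 1 - Pi.single v.castSucc 1) ⬝ᵥ x ≤
      (1 + (s.card : ℝ) / 2)⁻¹ + (1 + (t.card : ℝ) / 2)⁻¹ := by
  have hu := one_add_card_div_two_le_twoStepConductance hs
  have hv := one_add_card_div_two_le_twoStepConductance ht
  have hs_pos : 0 < 1 + (s.card : ℝ) / 2 := by positivity
  have ht_pos : 0 < 1 + (t.card : ℝ) / 2 := by positivity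
  refine (effectiveResistance_le_inv_twoStepConductance_add_inv starPlusPaths_symm
    (starPlusPaths_self hPs) starPlusPaths_nonneg (Fin.castSucc_ne_last u) (Fin.castSucc_ne_last v)
    (hs_pos.trans_le hu) (ht_pos.trans_le hv) hx).trans ?_
  gcongr

theorem stmt7_general (n : ℕ) (Ps : List (List (Fin n))) (hPs : ∀ l ∈ Ps, l.Nodup) (u v : Fin n)
    (hu : ∃ p ∈ Ps, ∃ hp : p ≠ [], u ∈ p ∧ u ≠ p.head hp ∧ u ≠ p.getLast hp)
    (hv : ∃ q ∈ Ps, v ∈ q ∧ 2 ≤ q.length)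
    (x : Fin (n + 1) → ℝ)
    (hx : (lapG (starPlusPaths n Ps)).mulVec x =
      Pi.single u.castSucc 1 - Pi.single v.castSucc 1) :
    (Pi.single u.castSucc 1 - Pi.single v.castSucc 1) ⬝ᵥ x ≤ 7 / 6 := by
  obtain ⟨p, hp, hne, hup, hhead, hlast⟩ := hu
  obtain ⟨q, hq, hvq, hlen⟩ := hv
  obtain ⟨a, b, hab, hua, hub⟩ :=
    exists_ne_pathAdj_of_ne_head_of_ne_getLast hp (hPs p hp) hne hup hhead hlast
  obtain ⟨c, hvc⟩ := exists_pathAdj_of_two_le_length hq hvq hlen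
  calc (Pi.single u.castSucc 1 - Pi.single v.castSucc 1) ⬝ᵥ x
      ≤ (1 + (({a, b} : Finset (Fin n)).card : ℝ) / 2)⁻¹ +
          (1 + (({c} : Finset (Fin n)).card : ℝ) / 2)⁻¹ :=
        effectiveResistance_starPlusPaths_le hPs (by simp [hua, hub]) (by simp [hvc]) hx
    _ = 7 / 6 := by
        rw [Finset.card_pair hab, Finset.card_singleton]
        norm_num

end StarPlusPaths

theorem stmt7 (n : ℕ) (Ps : List (List (Fin n))) (hPs : IsPathCover n Ps)
    (u v : Fin n) (huv : u ≠ v)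
    (hu : ∃ p ∈ Ps, ∃ hp : p ≠ [], u ∈ p ∧ u ≠ p.head hp ∧ u ≠ p.getLast hp)
    (hv : ∃ q ∈ Ps, v ∈ q ∧ 2 ≤ q.length)
    (x : Fin (n + 1) → ℝ)
    (hx : (lapG (starPlusPaths n Ps)).mulVec x =
      Pi.single u.castSucc 1 - Pi.single v.castSucc 1) :
    (Pi.single u.castSucc 1 - Pi.single v.castSucc 1) ⬝ᵥ x ≤ 7 / 6 :=
  stmt7_general n Ps (fun l hl => (hPs.1 l hl).2) u v hu hv x hx
end

section
/- For every integer n ≥ 3, the number of spanning trees of the wheel graph W_n satisfies T(W_n) < √5 · T(F_n). -/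
open Matrix

/-- The (weighted) number of spanning trees: determinant of the Laplacian with the
row and column of the last vertex removed. -/
def nst {n : ℕ} (W : Fin (n + 1) → Fin (n + 1) → ℝ) : ℝ :=
  ((lapG W).submatrix Fin.castSucc Fin.castSucc).det

/-- The fan graph `F_n`: the star `S_n` plus a path of `n - 1` unit-weight edges
through the `n` leaves. -/
def fanW (n : ℕ) : Fin (n + 1) → Fin (n + 1) → ℝ :=
  fun i j => starW n i j +
    if ((i : ℕ) + 1 = (j : ℕ) ∧ j ≠ Fin.last n) ∨
       ((j : ℕ) + 1 = (i : ℕ) ∧ i ≠ Fin.last n) then 1 else 0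

/-- The wheel graph `W_n`: the star `S_n` plus a cycle of `n` unit-weight edges
through the `n` leaves. -/
def wheelW (n : ℕ) : Fin (n + 1) → Fin (n + 1) → ℝ :=
  fun i j => starW n i j +
    if i ≠ j ∧ i ≠ Fin.last n ∧ j ≠ Fin.last n ∧
        (((i : ℕ) + 1) % n = (j : ℕ) ∨ ((j : ℕ) + 1) % n = (i : ℕ)) then 1 else 0

open scoped goldenRatio

/-!
Expanding the tridiagonal reduced Laplacian of the fan along its first row gives `T(F_n) = F_{2n}`,
where `F` is the Fibonacci sequence. The wheel is the fan plus the edge joining the two ends of the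
path, a rank-one change of the reduced Laplacian, so the matrix determinant lemma gives
`T(W_n) = T(F_n) + C₁₁ + C_{nn} - C_{1n} - C_{n1}` in terms of the cofactors of the fan. The
diagonal cofactors here are `F_{2n-1}` and the other two are `1`, whence
`T(W_n) = F_{2n-1} + F_{2n+1} - 2`. By Binet's formula `√5 T(F_n) = φ^{2n} - ψ^{2n}` and
`T(W_n) = φ^{2n} + ψ^{2n} - 2`, so that `√5 T(F_n) - T(W_n) = 2 (1 - ψ^{2n}) > 0`.
-/

section Fibonacci

theorem cast_fib_add_three {R : Type*} [CommRing R] (n : ℕ) :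
    (Nat.fib (n + 3) : R) = 2 * Nat.fib (n + 2) - Nat.fib n := by
  simp only [Nat.fib_add_two, Nat.cast_add]
  ring

theorem cast_fib_add_four {R : Type*} [CommRing R] (n : ℕ) :
    (Nat.fib (n + 4) : R) = 3 * Nat.fib (n + 2) - Nat.fib n := by
  simp only [Nat.fib_add_two, Nat.cast_add]
  ring

theorem fib_add_fib_add_two (n : ℕ) :
    (Nat.fib n + Nat.fib (n + 2) : ℝ) = φ ^ (n + 1) + ψ ^ (n + 1) := by
  rw [← Real.goldenRatio_mul_fib_succ_add_fib, ← Real.goldenConj_mul_fib_succ_add_fib,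
    Nat.fib_add_two]
  push_cast
  linear_combination (-(Nat.fib (n + 1) : ℝ)) * Real.goldenRatio_add_goldenConj

theorem sqrt_five_mul_fib (n : ℕ) : √5 * Nat.fib n = φ ^ n - ψ ^ n := by
  rw [Real.coe_fib_eq, mul_div_cancel₀ _ (by positivity)]

theorem goldenConj_pow_lt_one {n : ℕ} (hn : n ≠ 0) : ψ ^ n < 1 := by
  have abs_lt_one : |ψ| < 1 :=
    abs_lt.2 ⟨Real.neg_one_lt_goldenConj, Real.goldenConj_neg.trans one_pos⟩
  calc ψ ^ n ≤ |ψ| ^ n := (le_abs_self _).trans_eq (abs_pow ψ n)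
    _ < 1 := pow_lt_one₀ (abs_nonneg ψ) abs_lt_one hn

end Fibonacci

section Matrix

variable {m R : Type*} [Fintype m] [DecidableEq m] [CommRing R]

theorem det_add_vecMulVec {A : Matrix m m R} (hA : IsUnit A.det) (u v : m → R) :
    (A + vecMulVec u v).det = A.det + v ⬝ᵥ A.adjugate *ᵥ u := by
  rw [vecMulVec_eq Unit, det_add_replicateCol_mul_replicateRow hA, Matrix.det_unique (n := Unit),
    Matrix.add_apply, Matrix.one_apply_eq, mul_add, mul_one, Matrix.mul_assoc,
    ← replicateCol_mulVec, replicateRow_mul_replicateCol_apply, inv_def, smul_mulVec,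
    dotProduct_smul, smul_eq_mul, Ring.mul_inverse_cancel_left _ _ hA]

theorem dotProduct_mulVec_single_sub_single (A : Matrix m m R) (a b : m) :
    (Pi.single a 1 - Pi.single b 1) ⬝ᵥ A *ᵥ (Pi.single a 1 - Pi.single b 1) =
      A a a - A a b - A b a + A b b := by
  simp only [mulVec_sub, mulVec_single_one, sub_dotProduct, single_one_dotProduct, Pi.sub_apply,
    col_apply]
  ring

end Matrix

section Tridiagonal

variable {R : Type*} [CommRing R] {n : ℕ}

/-- The symmetric tridiagonal matrix with diagonal `d` and with `-1` next to the diagonal. Reduced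
Laplacians of fans have this form. -/
def tridiagonal (d : Fin n → R) : Matrix (Fin n) (Fin n) R :=
  of fun i j => if i = j then d i else if (i : ℕ) + 1 = j ∨ (j : ℕ) + 1 = i then -1 else 0

theorem tridiagonal_submatrix_succ (d : Fin (n + 1) → R) :
    (tridiagonal d).submatrix Fin.succ Fin.succ = tridiagonal (Fin.tail d) := by
  ext i j
  simp [tridiagonal, Fin.tail]

theorem tridiagonal_submatrix_rev (d : Fin n → R) :
    (tridiagonal d).submatrix Fin.rev Fin.rev = tridiagonal (d ∘ Fin.rev) := by
  ext i j
  have neighbours : ((i.rev : ℕ) + 1 = j.rev ∨ (j.rev : ℕ) + 1 = i.rev) ↔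
      ((i : ℕ) + 1 = j ∨ (j : ℕ) + 1 = i) := by
    simp only [Fin.val_rev]
    omega
  simp only [tridiagonal, submatrix_apply, of_apply, Fin.rev_inj, neighbours, Function.comp_apply]

theorem det_tridiagonal_succ_succ (d : Fin (n + 2) → R) :
    (tridiagonal d).det =
      d 0 * (tridiagonal (Fin.tail d)).det - (tridiagonal (Fin.tail (Fin.tail d))).det := by
  have minor : ((tridiagonal d).submatrix Fin.succ (Fin.succAbove 1)).det =
      -(tridiagonal (Fin.tail (Fin.tail d))).det := by
    rw [det_succ_column_zero, Fin.sum_univ_succ, Finset.sum_eq_zero]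
    · have columns : Fin.succAbove (1 : Fin (n + 2)) ∘ Fin.succ = Fin.succ ∘ Fin.succ :=
        funext Fin.one_succAbove_succ
      rw [← tridiagonal_submatrix_succ, ← tridiagonal_submatrix_succ, submatrix_submatrix,
        submatrix_submatrix, Fin.succAbove_zero, columns]
      simp [tridiagonal]
    · intro i _
      simp [tridiagonal, Fin.ext_iff]
  rw [det_succ_row_zero, Fin.sum_univ_succ, Fin.sum_univ_succ, Finset.sum_eq_zero]
  · rw [Fin.succAbove_zero, tridiagonal_submatrix_succ, Fin.succ_zero_eq_one, minor]
    have corner : tridiagonal d 0 0 = d 0 := by simp [tridiagonal]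
    have beside_corner : tridiagonal d 0 1 = -1 := by simp [tridiagonal]
    rw [corner, beside_corner, Fin.val_zero, Fin.val_one]
    ring
  · intro i _
    simp [tridiagonal, Fin.ext_iff]

theorem adjugate_tridiagonal_zero_zero (d : Fin (n + 1) → R) :
    (tridiagonal d).adjugate 0 0 = (tridiagonal (Fin.tail d)).det := by
  simp [adjugate_fin_succ_eq_det_submatrix, ← tridiagonal_submatrix_succ, Fin.succAbove_zero]

theorem adjugate_tridiagonal_zero_last (d : Fin (n + 1) → R) :
    (tridiagonal d).adjugate 0 (Fin.last n) = 1 := by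
  have triangular : ((tridiagonal d).submatrix Fin.castSucc Fin.succ).IsLowerTriangular := by
    intro i j hij
    have hij : (i : ℕ) < j := hij
    simp only [tridiagonal, submatrix_apply, of_apply, Fin.ext_iff, Fin.val_castSucc, Fin.val_succ]
    split_ifs <;> first | omega | rfl
  rw [adjugate_fin_succ_eq_det_submatrix, Fin.succAbove_zero, Fin.succAbove_last,
    det_of_isLowerTriangular _ triangular]
  simp [tridiagonal, Fin.ext_iff, ← mul_pow]

theorem adjugate_tridiagonal_rev (d : Fin n → R) (i j : Fin n) :
    (tridiagonal d).adjugate i.rev j.rev = (tridiagonal (d ∘ Fin.rev)).adjugate i j := by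
  rw [← tridiagonal_submatrix_rev]
  exact (congrFun₂ (adjugate_submatrix_equiv_self Fin.revPerm (tridiagonal d)) i j).symm

end Tridiagonal

section Laplacian

variable {V : Type*} [Fintype V] [DecidableEq V]

theorem lapG_add (W W' : V → V → ℝ) : lapG (W + W') = lapG W + lapG W' := by
  ext i j
  by_cases h : i = j
  · simp [lapG, h, Finset.sum_add_distrib]
  · simp [lapG, h, add_comm]

/-- The weight function of the graph whose only edge is the unit-weight edge between `a` and `b`. -/
def edgeW (a b : V) : V → V → ℝ :=
  fun i j => if (i = a ∧ j = b) ∨ (i = b ∧ j = a) then 1 else 0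

theorem lapG_edgeW {a b : V} (hab : a ≠ b) :
    lapG (edgeW a b) =
      vecMulVec (Pi.single a 1 - Pi.single b 1) (Pi.single a 1 - Pi.single b 1) := by
  have row_sum (i : V) : ∑ k, edgeW a b i k = if i = a ∨ i = b then 1 else 0 := by
    by_cases ha : i = a
    · simp [edgeW, ha, hab]
    · simp [edgeW, ha, ite_and]
  ext i j
  simp only [lapG, row_sum, vecMulVec_apply, Pi.sub_apply, Pi.single_apply]
  grind [edgeW]

variable {n : ℕ}

/-- The Laplacian with the row and column of the root `Fin.last n` removed, so that its determinant
is `nst W`. -/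
def redLap (W : Fin (n + 1) → Fin (n + 1) → ℝ) : Matrix (Fin n) (Fin n) ℝ :=
  (lapG W).submatrix Fin.castSucc Fin.castSucc

theorem det_redLap (W : Fin (n + 1) → Fin (n + 1) → ℝ) : (redLap W).det = nst W := rfl

theorem redLap_add_edgeW (W : Fin (n + 1) → Fin (n + 1) → ℝ) {a b : Fin n} (hab : a ≠ b) :
    redLap (W + edgeW a.castSucc b.castSucc) = redLap W +
      vecMulVec (Pi.single a 1 - Pi.single b 1) (Pi.single a 1 - Pi.single b 1) := by
  rw [redLap, lapG_add, lapG_edgeW (Fin.castSucc_injective n |>.ne hab)]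
  ext i j
  simp [redLap, vecMulVec_apply, Pi.single_apply]

theorem nst_add_edgeW {W : Fin (n + 1) → Fin (n + 1) → ℝ} (hW : nst W ≠ 0) {a b : Fin n}
    (hab : a ≠ b) :
    nst (W + edgeW a.castSucc b.castSucc) = nst W + ((redLap W).adjugate a a -
      (redLap W).adjugate a b - (redLap W).adjugate b a + (redLap W).adjugate b b) := by
  have unit : IsUnit (redLap W).det := hW.isUnit
  rw [← det_redLap, redLap_add_edgeW W hab, det_add_vecMulVec unit,
    dotProduct_mulVec_single_sub_single, det_redLap]

end Laplacian

section Fan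

theorem sum_fin_ite_val_eq {M : Type*} [AddCommMonoid M] (n c : ℕ) (x : M) :
    ∑ k : Fin n, (if (k : ℕ) = c then x else 0) = if c < n then x else 0 := by
  rw [Fin.sum_univ_eq_sum_range (fun k => if k = c then x else 0) n]
  simp

/-- The degrees of the leaves in the fan `F_n`: the two ends of the path have one neighbour fewer
than the other leaves. -/
def fanDegree (n : ℕ) (i : Fin n) : ℝ :=
  1 + (if 0 < (i : ℕ) then 1 else 0) + (if (i : ℕ) + 1 < n then 1 else 0)

theorem fanDegree_rev (n : ℕ) : fanDegree n ∘ Fin.rev = fanDegree n := by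
  ext i
  have := i.isLt
  simp only [fanDegree, Function.comp_apply, Fin.val_rev]
  grind

theorem fanW_castSucc_castSucc (n : ℕ) (i j : Fin n) : fanW n i.castSucc j.castSucc =
    if (i : ℕ) + 1 = j ∨ (j : ℕ) + 1 = i then 1 else 0 := by
  simp [fanW, starW, Fin.ext_iff, i.isLt.ne, j.isLt.ne]

theorem fanW_castSucc_last (n : ℕ) (i : Fin n) : fanW n i.castSucc (Fin.last n) = 1 := by
  have not_below : n + 1 ≠ i := by omega
  simp [fanW, starW, Fin.ext_iff, i.isLt.ne, not_below]

theorem sum_fanW_castSucc (n : ℕ) (i : Fin n) : ∑ k, fanW n i.castSucc k = fanDegree n i := by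
  have neighbours (k : Fin n) : fanW n i.castSucc k.castSucc =
      (if 0 < (i : ℕ) then if (k : ℕ) = i - 1 then 1 else 0 else 0) +
        if (k : ℕ) = i + 1 then 1 else 0 := by
    rw [fanW_castSucc_castSucc]
    grind
  have predecessor : (i : ℕ) - 1 < n := by omega
  simp only [Fin.sum_univ_castSucc, fanW_castSucc_last, neighbours, Finset.sum_add_distrib,
    Finset.sum_ite_irrel, Finset.sum_const_zero, sum_fin_ite_val_eq, predecessor, if_true,
    fanDegree]
  ring

theorem tail_tail_fanDegree (n : ℕ) :
    Fin.tail (Fin.tail (fanDegree (n + 2))) = Fin.tail (fanDegree (n + 1)) := by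
  ext i
  simp [Fin.tail, fanDegree]

theorem det_tridiagonal_tail_fanDegree (n : ℕ) :
    (tridiagonal (Fin.tail (fanDegree (n + 1)))).det = Nat.fib (2 * n + 1) := by
  induction n using Nat.twoStepInduction with
  | zero => simp
  | one => norm_num [det_unique, tridiagonal, Fin.tail, fanDegree]
  | more n ih ih' =>
    have degree : Fin.tail (fanDegree (n + 3)) 0 = 3 := by
      norm_num [Fin.tail, fanDegree]
    rw [det_tridiagonal_succ_succ, degree, tail_tail_fanDegree, tail_tail_fanDegree, ih, ih']
    exact (cast_fib_add_four (2 * n + 1)).symm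

theorem det_tridiagonal_fanDegree (n : ℕ) :
    (tridiagonal (fanDegree (n + 1))).det = Nat.fib (2 * n + 2) := by
  cases n with
  | zero => simp [det_unique, tridiagonal, fanDegree]
  | succ n =>
    have degree : fanDegree (n + 2) 0 = 2 := by
      norm_num [fanDegree]
    rw [det_tridiagonal_succ_succ, degree, tail_tail_fanDegree, det_tridiagonal_tail_fanDegree,
      det_tridiagonal_tail_fanDegree]
    exact (cast_fib_add_three (2 * n + 1)).symm

theorem redLap_fanW (n : ℕ) : redLap (fanW n) = tridiagonal (fanDegree n) := by
  ext i j
  simp only [redLap, lapG, submatrix_apply, Fin.castSucc_inj, sum_fanW_castSucc,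
    fanW_castSucc_castSucc, tridiagonal, of_apply]
  grind

theorem nst_fanW (n : ℕ) : nst (fanW (n + 1)) = Nat.fib (2 * n + 2) := by
  rw [← det_redLap, redLap_fanW, det_tridiagonal_fanDegree]

theorem wheelW_eq_fanW_add_edgeW {n : ℕ} (hn : 2 ≤ n) :
    wheelW (n + 1) = fanW (n + 1) + edgeW (Fin.castSucc 0) (Fin.castSucc (Fin.last n)) := by
  have successor (a : Fin (n + 2)) (ha : (a : ℕ) ≠ n + 1) :
      ((a : ℕ) + 1) % (n + 1) = if (a : ℕ) = n then 0 else (a : ℕ) + 1 := by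
    split_ifs with h
    · simp [h]
    · exact Nat.mod_eq_of_lt (by omega)
  ext i j
  have hi := successor i
  have hj := successor j
  simp only [wheelW, fanW, starW, edgeW, Pi.add_apply, ne_eq, Fin.ext_iff, Fin.val_last,
    Fin.val_castSucc, Fin.val_zero]
  grind

theorem nst_wheelW {n : ℕ} (hn : 2 ≤ n) :
    nst (wheelW (n + 1)) = Nat.fib (2 * n + 1) + Nat.fib (2 * n + 3) - 2 := by
  have fan_ne_zero : nst (fanW (n + 1)) ≠ 0 := by
    rw [nst_fanW]
    exact_mod_cast (Nat.fib_pos.2 (by omega)).ne'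
  have ends_ne : (0 : Fin (n + 1)) ≠ Fin.last n := Fin.ne_of_val_ne (by
    simp only [Fin.val_zero, Fin.val_last]
    omega)
  set C := (tridiagonal (fanDegree (n + 1))).adjugate with hC
  have palindromic (i j : Fin (n + 1)) : C i.rev j.rev = C i j := by
    rw [hC, adjugate_tridiagonal_rev, fanDegree_rev]
  have first_first : C 0 0 = Nat.fib (2 * n + 1) := by
    rw [hC, adjugate_tridiagonal_zero_zero, det_tridiagonal_tail_fanDegree]
  have first_last : C 0 (Fin.last n) = 1 := adjugate_tridiagonal_zero_last _
  have last_first : C (Fin.last n) 0 = 1 := by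
    rw [← palindromic, Fin.rev_last, Fin.rev_zero, first_last]
  have last_last : C (Fin.last n) (Fin.last n) = Nat.fib (2 * n + 1) := by
    rw [← palindromic, Fin.rev_last, first_first]
  rw [wheelW_eq_fanW_add_edgeW hn, nst_add_edgeW fan_ne_zero ends_ne, nst_fanW, redLap_fanW,
    ← hC, first_first, first_last, last_first, last_last, Nat.fib_add_two (n := 2 * n + 1)]
  push_cast
  ring

end Fan

theorem stmt10 (n : ℕ) (hn : 3 ≤ n) :
    nst (wheelW n) < Real.sqrt 5 * nst (fanW n) := by
  obtain ⟨n, rfl⟩ : ∃ m, n = m + 1 := ⟨n - 1, by omega⟩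
  calc nst (wheelW (n + 1)) = φ ^ (2 * n + 2) + ψ ^ (2 * n + 2) - 2 := by
        rw [nst_wheelW (by omega), fib_add_fib_add_two]
    _ < φ ^ (2 * n + 2) - ψ ^ (2 * n + 2) := by
        linarith [goldenConj_pow_lt_one (n := 2 * n + 2) (by omega)]
    _ = √5 * nst (fanW (n + 1)) := by rw [nst_fanW, sqrt_five_mul_fib]
end
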